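/- arXiv:math/0402131 — 3 statements merged into one kernel-verified Lean document; each statement's English description precedes it below -/
import Mathlib

section
/- Let V be the 2-dimensional ℚ-vector space with basis {v₊, v₋}, and define ℚ-linear maps m' : V ⊗ V → V, Δ' : V → V ⊗ V, ι' : ℚ → V, ε' : V → ℚ by m'(v₊⊗v₊) = m'(v₋⊗v₋) = v₊, m'(v₊⊗v₋) = m'(v₋⊗v₊) = v₋, Δ'(v₊) = v₊⊗v₋ + v₋⊗v₊, Δ'(v₋) = v₋⊗v₋ + v₊⊗v₊, ι'(1) = v₊, ε'(v₊) = 0, ε'(v₋) = 1. Then (V, m', ι', Δ', ε') is a commutative Frobenius algebra over ℚ: m' is associative and commutative with unit v₊ = ι'(1); Δ' is coassociative and cocommutative with counit ε' (i.e. (ε'⊗id)∘Δ' = id = (id⊗ε')∘Δ'); and the Frobenius identity Δ'∘m' = (m'⊗id)∘(id⊗Δ') = (id⊗m')∘(Δ'⊗id) holds. -/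
/-!
Lee's deformation of Khovanov's TQFT: the vector space `V = ℚ²` assigned to a
circle, with basis `v₊ = (1,0)`, `v₋ = (0,1)`, together with Lee's structure
maps `m'`, `Δ'`, `ι'`, `ε'`, forms a commutative Frobenius algebra over ℚ.
-/

open TensorProduct

/-- The underlying vector space of Lee's TQFT: a 2-dimensional ℚ-vector space. -/
abbrev V : Type := ℚ × ℚ

/-- The basis vector `v₊`. -/
def vp : V := (1, 0)

/-- The basis vector `v₋`. -/
def vm : V := (0, 1)

/-- Commutative Frobenius algebras over `R`, with the structure maps `m` (multiplication), `Δ`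
(comultiplication), `η` (unit) and `ε` (counit) on a module `A` unbundled, so that `A` may carry an
unrelated ring structure, as `V = ℚ × ℚ` does. The right unit and counit laws are not fields, being
the left ones composed with the swap of `A ⊗ A`. -/
structure IsCommFrobeniusAlgebra {R A : Type*} [CommSemiring R] [AddCommMonoid A] [Module R A]
    (m : A ⊗[R] A →ₗ[R] A) (Δ : A →ₗ[R] A ⊗[R] A) (η : R →ₗ[R] A) (ε : A →ₗ[R] R) : Prop where
  mul_assoc : m ∘ₗ m.rTensor A = m ∘ₗ m.lTensor A ∘ₗ TensorProduct.assoc R A A A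
  mul_comm : m ∘ₗ TensorProduct.comm R A A = m
  one_mul : m ∘ₗ η.rTensor A = (TensorProduct.lid R A).toLinearMap
  coassoc : TensorProduct.assoc R A A A ∘ₗ Δ.rTensor A ∘ₗ Δ = Δ.lTensor A ∘ₗ Δ
  cocomm : TensorProduct.comm R A A ∘ₗ Δ = Δ
  counit_left : TensorProduct.lid R A ∘ₗ ε.rTensor A ∘ₗ Δ = LinearMap.id
  frobenius_left : Δ ∘ₗ m = m.rTensor A ∘ₗ (TensorProduct.assoc R A A A).symm ∘ₗ Δ.lTensor A
  frobenius_right : Δ ∘ₗ m = m.lTensor A ∘ₗ TensorProduct.assoc R A A A ∘ₗ Δ.rTensor A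

namespace IsCommFrobeniusAlgebra

variable {R A : Type*} [CommSemiring R] [AddCommMonoid A] [Module R A]
  {m : A ⊗[R] A →ₗ[R] A} {Δ : A →ₗ[R] A ⊗[R] A} {η : R →ₗ[R] A} {ε : A →ₗ[R] R}

theorem mul_comm_apply (h : IsCommFrobeniusAlgebra m Δ η ε) (x y : A) :
    m (x ⊗ₜ y) = m (y ⊗ₜ x) :=
  LinearMap.congr_fun h.mul_comm (y ⊗ₜ x)

theorem one_mul_apply (h : IsCommFrobeniusAlgebra m Δ η ε) (x : A) : m (η 1 ⊗ₜ x) = x := by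
  simpa using LinearMap.congr_fun h.one_mul (1 ⊗ₜ x)

theorem mul_one_apply (h : IsCommFrobeniusAlgebra m Δ η ε) (x : A) : m (x ⊗ₜ η 1) = x :=
  (h.mul_comm_apply x (η 1)).trans (h.one_mul_apply x)

theorem counit_right (h : IsCommFrobeniusAlgebra m Δ η ε) :
    TensorProduct.rid R A ∘ₗ ε.lTensor A ∘ₗ Δ = LinearMap.id := by
  have swap : TensorProduct.rid R A ∘ₗ ε.lTensor A ∘ₗ TensorProduct.comm R A A =
      (TensorProduct.lid R A).toLinearMap ∘ₗ ε.rTensor A := by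
    ext x y
    simp
  calc TensorProduct.rid R A ∘ₗ ε.lTensor A ∘ₗ Δ
      = (TensorProduct.rid R A ∘ₗ ε.lTensor A ∘ₗ TensorProduct.comm R A A) ∘ₗ Δ := by
        rw [LinearMap.comp_assoc, LinearMap.comp_assoc, h.cocomm]
    _ = LinearMap.id := by rw [swap, LinearMap.comp_assoc, h.counit_left]

end IsCommFrobeniusAlgebra

section SpanningFamily

variable {R M : Type*} [CommSemiring R] [AddCommMonoid M] [Module R M]

theorem span_range_tmul_eq_top {N ι κ : Type*} [AddCommMonoid N] [Module R N]
    {v : ι → M} {w : κ → N} (hv : Submodule.span R (Set.range v) = ⊤)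
    (hw : Submodule.span R (Set.range w) = ⊤) :
    Submodule.span R (Set.range fun p : ι × κ => v p.1 ⊗ₜ[R] w p.2) = ⊤ := by
  rw [← TensorProduct.map₂_mk_top_top_eq_top R M N, ← hv, ← hw, Submodule.map₂_span_span,
    Set.image2_range]
  rfl

variable {G : Type*} {v : G → M} {m : M ⊗[R] M →ₗ[R] M} {Δ : M →ₗ[R] M ⊗[R] M}

theorem mul_assoc_of_apply_tmul [AddSemigroup G]
    (hv : Submodule.span R (Set.range v) = ⊤)
    (hm : ∀ g h, m (v g ⊗ₜ v h) = v (g + h)) :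
    m ∘ₗ m.rTensor M = m ∘ₗ m.lTensor M ∘ₗ TensorProduct.assoc R M M M :=
  LinearMap.ext_on_range (span_range_tmul_eq_top (span_range_tmul_eq_top hv hv) hv)
    fun ⟨⟨g, h⟩, k⟩ => by simp [hm, add_assoc]

theorem mul_comm_of_apply_tmul [AddCommMagma G]
    (hv : Submodule.span R (Set.range v) = ⊤)
    (hm : ∀ g h, m (v g ⊗ₜ v h) = v (g + h)) :
    m ∘ₗ TensorProduct.comm R M M = m :=
  LinearMap.ext_on_range (span_range_tmul_eq_top hv hv)
    fun ⟨g, h⟩ => by simp [hm, add_comm]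

theorem one_mul_of_apply_tmul [AddZeroClass G] {η : R →ₗ[R] M}
    (hv : Submodule.span R (Set.range v) = ⊤)
    (hm : ∀ g h, m (v g ⊗ₜ v h) = v (g + h)) (hη : η 1 = v 0) :
    m ∘ₗ η.rTensor M = (TensorProduct.lid R M).toLinearMap :=
  TensorProduct.ext <| LinearMap.ext_ring <| LinearMap.ext_on_range hv
    fun g => by simp [hη, hm]

variable [AddCommGroup G] [Fintype G] {s : G}

theorem coassoc_of_apply (hv : Submodule.span R (Set.range v) = ⊤)
    (hΔ : ∀ g, Δ (v g) = ∑ h, v h ⊗ₜ v (g + s - h)) :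
    TensorProduct.assoc R M M M ∘ₗ Δ.rTensor M ∘ₗ Δ = Δ.lTensor M ∘ₗ Δ := by
  refine LinearMap.ext_on_range hv fun g => ?_
  have reindex (k : G) : ∑ h, v (h + s - k) ⊗ₜ[R] v (g + s - h) =
      ∑ h, v h ⊗ₜ v (g + s - k + s - h) :=
    Fintype.sum_equiv (Equiv.addRight (s - k)) _ _ fun h => by
      simp only [Equiv.coe_addRight]
      congr 2 <;> abel
  calc TensorProduct.assoc R M M M (Δ.rTensor M (Δ (v g)))
      = ∑ h, ∑ k, v k ⊗ₜ (v (h + s - k) ⊗ₜ v (g + s - h)) := by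
        simp only [hΔ, map_sum, LinearMap.rTensor_tmul, TensorProduct.sum_tmul,
          TensorProduct.assoc_tmul]
    _ = ∑ k, v k ⊗ₜ ∑ h, v (h + s - k) ⊗ₜ v (g + s - h) := by
        rw [Finset.sum_comm]
        simp only [TensorProduct.tmul_sum]
    _ = ∑ k, v k ⊗ₜ ∑ h, v h ⊗ₜ v (g + s - k + s - h) := by simp only [reindex]
    _ = Δ.lTensor M (Δ (v g)) := by simp only [hΔ, map_sum, LinearMap.lTensor_tmul]

theorem cocomm_of_apply (hv : Submodule.span R (Set.range v) = ⊤)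
    (hΔ : ∀ g, Δ (v g) = ∑ h, v h ⊗ₜ v (g + s - h)) :
    TensorProduct.comm R M M ∘ₗ Δ = Δ := by
  refine LinearMap.ext_on_range hv fun g => ?_
  calc TensorProduct.comm R M M (Δ (v g))
      = ∑ h, v (g + s - h) ⊗ₜ v h := by simp only [hΔ, map_sum, TensorProduct.comm_tmul]
    _ = ∑ h, v h ⊗ₜ v (g + s - h) :=
        Fintype.sum_equiv (Equiv.subLeft (g + s)) _ _ fun h => by
          simp only [Equiv.subLeft_apply, sub_sub_cancel]
    _ = Δ (v g) := (hΔ g).symm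

theorem counit_left_of_apply [DecidableEq G] {ε : M →ₗ[R] R}
    (hv : Submodule.span R (Set.range v) = ⊤)
    (hΔ : ∀ g, Δ (v g) = ∑ h, v h ⊗ₜ v (g + s - h)) (hε : ∀ g, ε (v g) = if g = s then 1 else 0) :
    TensorProduct.lid R M ∘ₗ ε.rTensor M ∘ₗ Δ = LinearMap.id :=
  LinearMap.ext_on_range hv fun g => by simp [hΔ, hε]

theorem frobenius_left_of_apply (hv : Submodule.span R (Set.range v) = ⊤)
    (hm : ∀ g h, m (v g ⊗ₜ v h) = v (g + h))
    (hΔ : ∀ g, Δ (v g) = ∑ h, v h ⊗ₜ v (g + s - h)) :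
    Δ ∘ₗ m = m.rTensor M ∘ₗ (TensorProduct.assoc R M M M).symm ∘ₗ Δ.lTensor M := by
  refine LinearMap.ext_on_range (span_range_tmul_eq_top hv hv) fun ⟨g, h⟩ => ?_
  calc Δ (m (v g ⊗ₜ v h))
      = ∑ k, v k ⊗ₜ v (g + h + s - k) := by rw [hm, hΔ]
    _ = ∑ k, v (g + k) ⊗ₜ v (h + s - k) :=
        (Fintype.sum_equiv (Equiv.addLeft g) _ _ fun k => by
          simp only [Equiv.coe_addLeft]
          congr 2
          abel).symm
    _ = m.rTensor M ((TensorProduct.assoc R M M M).symm (Δ.lTensor M (v g ⊗ₜ v h))) := by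
        simp only [LinearMap.lTensor_tmul, hΔ, TensorProduct.tmul_sum, map_sum,
          TensorProduct.assoc_symm_tmul, LinearMap.rTensor_tmul, hm]

theorem frobenius_right_of_apply (hv : Submodule.span R (Set.range v) = ⊤)
    (hm : ∀ g h, m (v g ⊗ₜ v h) = v (g + h))
    (hΔ : ∀ g, Δ (v g) = ∑ h, v h ⊗ₜ v (g + s - h)) :
    Δ ∘ₗ m = m.lTensor M ∘ₗ TensorProduct.assoc R M M M ∘ₗ Δ.rTensor M := by
  refine LinearMap.ext_on_range (span_range_tmul_eq_top hv hv) fun ⟨g, h⟩ => ?_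
  calc Δ (m (v g ⊗ₜ v h))
      = ∑ k, v k ⊗ₜ v (g + h + s - k) := by rw [hm, hΔ]
    _ = ∑ k, v k ⊗ₜ v (g + s - k + h) := by
        refine Finset.sum_congr rfl fun k _ => ?_
        congr 2
        abel
    _ = m.lTensor M (TensorProduct.assoc R M M M (Δ.rTensor M (v g ⊗ₜ v h))) := by
        simp only [LinearMap.rTensor_tmul, hΔ, TensorProduct.sum_tmul, map_sum,
          TensorProduct.assoc_tmul, LinearMap.lTensor_tmul, hm]

end SpanningFamily

/-- The hypotheses describe the group algebra `R[G]` with the functional "coefficient at `s`", or a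
quotient of it when `v` is linearly dependent. Lee's `V` is the case `G = ℤ/2`, `v₊ = v 0`,
`v₋ = v 1`, `s = 1`; that is, `ℚ[X]/(X² - 1)` with `v₊ = 1` and `v₋ = X`. -/
theorem lee_TQFT_is_commutative_frobenius_general {R M G : Type*} [CommSemiring R]
    [AddCommMonoid M] [Module R M] [AddCommGroup G] [Fintype G] [DecidableEq G]
    {v : G → M} (hv : Submodule.span R (Set.range v) = ⊤) {s : G}
    {m : M ⊗[R] M →ₗ[R] M} {Δ : M →ₗ[R] M ⊗[R] M} {η : R →ₗ[R] M} {ε : M →ₗ[R] R}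
    (hm : ∀ g h, m (v g ⊗ₜ v h) = v (g + h))
    (hΔ : ∀ g, Δ (v g) = ∑ h, v h ⊗ₜ v (g + s - h))
    (hη : η 1 = v 0) (hε : ∀ g, ε (v g) = if g = s then 1 else 0) :
    IsCommFrobeniusAlgebra m Δ η ε where
  mul_assoc := mul_assoc_of_apply_tmul hv hm
  mul_comm := mul_comm_of_apply_tmul hv hm
  one_mul := one_mul_of_apply_tmul hv hm hη
  coassoc := coassoc_of_apply hv hΔ
  cocomm := cocomm_of_apply hv hΔ
  counit_left := counit_left_of_apply hv hΔ hε
  frobenius_left := frobenius_left_of_apply hv hm hΔ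
  frobenius_right := frobenius_right_of_apply hv hm hΔ

theorem span_range_vp_vm_eq_top : Submodule.span ℚ (Set.range ![vp, vm]) = ⊤ := by
  rw [Matrix.range_cons_cons_empty, eq_top_iff]
  exact fun x _ => Submodule.mem_span_pair.2 ⟨x.1, x.2, by simp [vp, vm]⟩

theorem lee_TQFT_is_commutative_frobenius
    (m' : V ⊗[ℚ] V →ₗ[ℚ] V) (Δ' : V →ₗ[ℚ] V ⊗[ℚ] V)
    (ι' : ℚ →ₗ[ℚ] V) (ε' : V →ₗ[ℚ] ℚ)
    (hm1 : m' (vp ⊗ₜ vp) = vp) (hm2 : m' (vm ⊗ₜ vm) = vp)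
    (hm3 : m' (vp ⊗ₜ vm) = vm) (hm4 : m' (vm ⊗ₜ vp) = vm)
    (hΔ1 : Δ' vp = vp ⊗ₜ vm + vm ⊗ₜ vp)
    (hΔ2 : Δ' vm = vm ⊗ₜ vm + vp ⊗ₜ vp)
    (hι : ι' 1 = vp) (hε1 : ε' vp = 0) (hε2 : ε' vm = 1) :
    -- `m'` is associative
    (∀ x y z : V, m' (m' (x ⊗ₜ y) ⊗ₜ z) = m' (x ⊗ₜ m' (y ⊗ₜ z))) ∧
    -- `m'` is commutative
    (∀ x y : V, m' (x ⊗ₜ y) = m' (y ⊗ₜ x)) ∧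
    -- `v₊ = ι'(1)` is a (two-sided) unit for `m'`
    (∀ x : V, m' (ι' 1 ⊗ₜ x) = x ∧ m' (x ⊗ₜ ι' 1) = x) ∧
    -- `Δ'` is coassociative
    (∀ x : V, (TensorProduct.assoc ℚ V V V)
        (TensorProduct.map Δ' LinearMap.id (Δ' x))
        = TensorProduct.map LinearMap.id Δ' (Δ' x)) ∧
    -- `Δ'` is cocommutative
    (∀ x : V, (TensorProduct.comm ℚ V V) (Δ' x) = Δ' x) ∧
    -- `ε'` is a counit for `Δ'`: `(ε'⊗id)∘Δ' = id = (id⊗ε')∘Δ'`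
    (∀ x : V,
      (TensorProduct.lid ℚ V) (TensorProduct.map ε' LinearMap.id (Δ' x)) = x ∧
      (TensorProduct.rid ℚ V) (TensorProduct.map LinearMap.id ε' (Δ' x)) = x) ∧
    -- the Frobenius identity `Δ'∘m' = (m'⊗id)∘(id⊗Δ') = (id⊗m')∘(Δ'⊗id)`
    (∀ x y : V,
      Δ' (m' (x ⊗ₜ y))
        = TensorProduct.map m' LinearMap.id
            ((TensorProduct.assoc ℚ V V V).symm (x ⊗ₜ Δ' y)) ∧
      Δ' (m' (x ⊗ₜ y))
        = TensorProduct.map LinearMap.id m'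
            ((TensorProduct.assoc ℚ V V V) (Δ' x ⊗ₜ y))) := by
  have h : IsCommFrobeniusAlgebra m' Δ' ι' ε' :=
    lee_TQFT_is_commutative_frobenius_general span_range_vp_vm_eq_top (s := (1 : Fin 2))
      (by simp [Fin.forall_fin_two, hm1, hm2, hm3, hm4])
      (by simp [Fin.forall_fin_two, hΔ1, hΔ2, add_comm]) hι
      (by simp [Fin.forall_fin_two, hε1, hε2])
  exact ⟨fun x y z => LinearMap.congr_fun h.mul_assoc (x ⊗ₜ y ⊗ₜ z), h.mul_comm_apply,
    fun x => ⟨h.one_mul_apply x, h.mul_one_apply x⟩,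
    LinearMap.congr_fun h.coassoc, LinearMap.congr_fun h.cocomm,
    fun x => ⟨LinearMap.congr_fun h.counit_left x, LinearMap.congr_fun h.counit_right x⟩,
    fun x y => ⟨LinearMap.congr_fun h.frobenius_left (x ⊗ₜ y),
      LinearMap.congr_fun h.frobenius_right (x ⊗ₜ y)⟩⟩
end

section
/- Let V be the 2-dimensional ℚ-vector space with basis {v₊, v₋}, and define ℚ-linear maps m' : V ⊗ V → V, Δ' : V → V ⊗ V, ι' : ℚ → V, ε' : V → ℚ by m'(v₊⊗v₊) = m'(v₋⊗v₋) = v₊, m'(v₊⊗v₋) = m'(v₋⊗v₊) = v₋, Δ'(v₊) = v₊⊗v₋ + v₋⊗v₊, Δ'(v₋) = v₋⊗v₋ + v₊⊗v₊, ι'(1) = v₊, ε'(v₊) = 0, ε'(v₋) = 1. Set α = v₋ + v₊ and β = v₋ − v₊. Then {α, β} is a basis of V, and with respect to this basis the structure maps diagonalize: m'(α⊗α) = 2α, m'(β⊗β) = −2β, m'(α⊗β) = m'(β⊗α) = 0, Δ'(α) = α⊗α, Δ'(β) = β⊗β, ε'(α) = ε'(β) = 1, and ι'(1) = (α−β)/2.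 -/
/-!
Lee's basis `{α, β}` (with `α = v₋ + v₊`, `β = v₋ − v₊`) for the vector space
`V = ℚ²` of Lee's TQFT, in which the structure maps `m'`, `Δ'`, `ι'`, `ε'`
diagonalize.
-/

open TensorProduct

/-- Lee's element `α = v₋ + v₊`. -/
def av : V := vm + vp

/-- Lee's element `β = v₋ − v₊`. -/
def bv : V := vm - vp

/-!
The `m'`-square of `v₋` is `v₊`, so Lee's algebra is `ℚ[y]/(y² - 1)` with `y = v₋` and unit
`v₊ = 1`. Both `α` and `β` have the form `y + c` with `c² = 1`, and `y (y + c) = c (y + c)`.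
Hence `(y + c)(y + d) = (c + d)(y + c)`, which is `2α`, `-2β` or `0` according to the choice of the
signs `c` and `d`. Likewise `c² = 1` turns
`Δ'(y + c) = y ⊗ y + 1 ⊗ 1 + c (1 ⊗ y + y ⊗ 1)` into `(y + c) ⊗ (y + c)`.
-/

section CommSemiring

variable {R M : Type*} [CommSemiring R] [AddCommMonoid M] [Module R M] {x y : M} {c : R}

theorem map_add_smul_tmul_add_smul {m : M ⊗[R] M →ₗ[R] M} (hxx : m (x ⊗ₜ x) = x)
    (hyy : m (y ⊗ₜ y) = c ^ 2 • x) (hxy : m (x ⊗ₜ y) = y) (hyx : m (y ⊗ₜ x) = y) (d : R) :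
    m ((y + c • x) ⊗ₜ (y + d • x)) = (c + d) • (y + c • x) := by
  simp only [add_tmul, tmul_add, ← smul_tmul', tmul_smul, map_add, map_smul, hxx, hyy, hxy, hyx]
  module

theorem map_add_smul_eq_tmul_self {Δ : M →ₗ[R] M ⊗[R] M} (hx : Δ x = x ⊗ₜ y + y ⊗ₜ x)
    (hy : Δ y = y ⊗ₜ y + c ^ 2 • x ⊗ₜ x) :
    Δ (y + c • x) = (y + c • x) ⊗ₜ (y + c • x) := by
  simp only [add_tmul, tmul_add, ← smul_tmul', tmul_smul, map_add, map_smul, hx, hy]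
  module

end CommSemiring

section CommRing

variable {R M : Type*} [CommRing R] [AddCommGroup M] [Module R M] {x y : M} {c d : R}

theorem linearIndependent_pair_add_smul (h : LinearIndependent R ![x, y])
    (hcd : c - d ∈ nonZeroDivisors R) : LinearIndependent R ![y + c • x, y + d • x] := by
  rw [LinearIndependent.pair_iff]
  intro s t hst
  obtain ⟨hx, hy⟩ : s * c + t * d = 0 ∧ s + t = 0 := by
    refine h.eq_zero_of_pair ?_
    rw [← hst]
    module
  have hs : s = 0 := (mem_nonZeroDivisors_iff.mp hcd).2 s (by linear_combination hx - d * hy)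
  exact ⟨hs, by simpa [hs] using hy⟩

theorem span_pair_add_smul (hcd : IsUnit (c - d)) :
    Submodule.span R {y + c • x, y + d • x} = Submodule.span R {x, y} := by
  obtain ⟨u, hu⟩ := hcd.exists_left_inv
  apply le_antisymm <;> rw [Submodule.span_le, Set.pair_subset_iff] <;>
    simp only [SetLike.mem_coe, Submodule.mem_span_pair]
  · exact ⟨⟨c, 1, by module⟩, ⟨d, 1, by module⟩⟩
  · exact ⟨⟨u, -u, by linear_combination (norm := module) hu • x⟩,
      ⟨-u * d, u * c, by linear_combination (norm := module) hu • y⟩⟩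

theorem lee_basis_diagonalizes_general [Invertible (2 : R)]
    (hli : LinearIndependent R ![x, y]) (hspan : Submodule.span R {x, y} = ⊤)
    {m : M ⊗[R] M →ₗ[R] M} {Δ : M →ₗ[R] M ⊗[R] M} {ι : R →ₗ[R] M} {ε : M →ₗ[R] R}
    (hxx : m (x ⊗ₜ x) = x) (hyy : m (y ⊗ₜ y) = x)
    (hxy : m (x ⊗ₜ y) = y) (hyx : m (y ⊗ₜ x) = y)
    (hΔx : Δ x = x ⊗ₜ y + y ⊗ₜ x) (hΔy : Δ y = y ⊗ₜ y + x ⊗ₜ x)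
    (hι : ι 1 = x) (hεx : ε x = 0) (hεy : ε y = 1) :
    (LinearIndependent R ![y + x, y - x] ∧ Submodule.span R {y + x, y - x} = ⊤) ∧
    m ((y + x) ⊗ₜ (y + x)) = (2 : R) • (y + x) ∧
    m ((y - x) ⊗ₜ (y - x)) = (-2 : R) • (y - x) ∧
    m ((y + x) ⊗ₜ (y - x)) = 0 ∧
    m ((y - x) ⊗ₜ (y + x)) = 0 ∧
    Δ (y + x) = (y + x) ⊗ₜ (y + x) ∧
    Δ (y - x) = (y - x) ⊗ₜ (y - x) ∧
    ε (y + x) = 1 ∧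
    ε (y - x) = 1 ∧
    ι 1 = (⅟2 : R) • ((y + x) - (y - x)) := by
  have hα : y + x = y + (1 : R) • x := by module
  have hβ : y - x = y + (-1 : R) • x := by module
  have hsub : IsUnit ((1 : R) - -1) := by
    rw [sub_neg_eq_add, one_add_one_eq_two]
    exact isUnit_of_invertible 2
  have hmul {c : R} (hc : c ^ 2 = 1) (d : R) :
      m ((y + c • x) ⊗ₜ (y + d • x)) = (c + d) • (y + c • x) :=
    map_add_smul_tmul_add_smul hxx (by rw [hyy, hc, one_smul]) hxy hyx d
  have hcomul {c : R} (hc : c ^ 2 = 1) : Δ (y + c • x) = (y + c • x) ⊗ₜ (y + c • x) :=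
    map_add_smul_eq_tmul_self hΔx (by rw [hΔy, hc, one_smul])
  have hunit : ι 1 = (⅟2 : R) • ((y + x) - (y - x)) := by
    have hαβ : (y + x) - (y - x) = (2 : R) • x := by module
    rw [hι, hαβ, invOf_smul_smul]
  simp only [hα, hβ] at hunit ⊢
  exact ⟨⟨linearIndependent_pair_add_smul hli hsub.mem_nonZeroDivisors,
      (span_pair_add_smul hsub).trans hspan⟩,
    (hmul (one_pow 2) 1).trans (by module), (hmul neg_one_sq (-1)).trans (by module),
    (hmul (one_pow 2) (-1)).trans (by module), (hmul neg_one_sq 1).trans (by module),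
    hcomul (one_pow 2), hcomul neg_one_sq, by simp [hεx, hεy], by simp [hεx, hεy], hunit⟩

end CommRing

theorem linearIndependent_vp_vm : LinearIndependent ℚ ![vp, vm] := by
  convert (Module.Basis.finTwoProd ℚ).linearIndependent using 1
  ext i : 1
  fin_cases i <;> simp [vp, vm]

theorem span_vp_vm_eq_top : Submodule.span ℚ {vp, vm} = ⊤ := by
  rw [← Matrix.range_cons_cons_empty vp vm ![]]
  exact linearIndependent_vp_vm.span_eq_top_of_card_eq_finrank (by simp)

theorem lee_basis_diagonalizes
    (m' : V ⊗[ℚ] V →ₗ[ℚ] V) (Δ' : V →ₗ[ℚ] V ⊗[ℚ] V)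
    (ι' : ℚ →ₗ[ℚ] V) (ε' : V →ₗ[ℚ] ℚ)
    (hm1 : m' (vp ⊗ₜ vp) = vp) (hm2 : m' (vm ⊗ₜ vm) = vp)
    (hm3 : m' (vp ⊗ₜ vm) = vm) (hm4 : m' (vm ⊗ₜ vp) = vm)
    (hΔ1 : Δ' vp = vp ⊗ₜ vm + vm ⊗ₜ vp)
    (hΔ2 : Δ' vm = vm ⊗ₜ vm + vp ⊗ₜ vp)
    (hι : ι' 1 = vp) (hε1 : ε' vp = 0) (hε2 : ε' vm = 1) :
    -- `{α, β}` is a basis of `V`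
    (LinearIndependent ℚ ![av, bv] ∧ Submodule.span ℚ {av, bv} = ⊤) ∧
    -- the multiplication diagonalizes
    m' (av ⊗ₜ av) = (2 : ℚ) • av ∧
    m' (bv ⊗ₜ bv) = (-2 : ℚ) • bv ∧
    m' (av ⊗ₜ bv) = 0 ∧
    m' (bv ⊗ₜ av) = 0 ∧
    -- the comultiplication diagonalizes
    Δ' av = av ⊗ₜ av ∧
    Δ' bv = bv ⊗ₜ bv ∧
    -- counit and unit in the new basis
    ε' av = 1 ∧
    ε' bv = 1 ∧
    ι' 1 = (2 : ℚ)⁻¹ • (av - bv) :=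
  lee_basis_diagonalizes_general linearIndependent_vp_vm span_vp_vm_eq_top
    hm1 hm2 hm3 hm4 hΔ1 hΔ2 hι hε1 hε2
end

section
/- Let C be a cochain complex of finite-dimensional ℚ-vector spaces, nonzero in only finitely many degrees, with a finite decreasing filtration by subcomplexes C = F_m ⊇ F_{m+1} ⊇ ⋯ ⊇ F_M = 0. Let C* be the dual complex (whose space in degree n is the dual of the space of C in degree −n, with differential the transpose of the differential of C), and filter C* by the subspaces G_j := { φ ∈ C* : φ vanishes on F_{1−j} }. Then: (1) each G_j is a subcomplex of C*, and G_{1−m} ⊇ G_{2−m} ⊇ ⋯ is a finite decreasing filtration of C* with largest term C* and smallest term 0; (2) denoting by S_i ⊆ H(C) and T_j ⊆ H(C*) the induced filtrations on cohomology (classes with a representative in F_i, respectively G_j), for every integer i and every degree the associated graded piece T_{−i}/T_{−i+1} of H(C*) is isomorphic as a ℚ-vector space to the dual of the associated graded piece S_i/S_{i+1} of H(C) (in the corresponding dual degree). -/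
/-!
The dual of a finitely filtered cochain complex of finite-dimensional ℚ-vector
spaces: the annihilator filtration `G_j = (F_{1-j})^⊥` is a finite decreasing
filtration of the dual complex by subcomplexes, and the associated graded
pieces of the induced filtration on the cohomology of the dual complex are the
duals of the associated graded pieces of the induced filtration on the
cohomology of the original complex.
-/

noncomputable section

/-- A cochain complex of ℚ-vector spaces (differential of degree `+1`) equipped
with a decreasing filtration by subcomplexes, indexed by all of ℤ; finiteness
of the filtration (`⊤` at some index `m`, `⊥` at some index `M`) is imposed
separately in the theorem. -/
structure FilteredComplex where
  /-- the space in each (cohomological) degree -/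
  X : ℤ → Type
  [acg : ∀ n, AddCommGroup (X n)]
  [mod : ∀ n, Module ℚ (X n)]
  /-- the differential, of degree `+1` -/
  d : ∀ n, X n →ₗ[ℚ] X (n + 1)
  dsq : ∀ n, (d (n + 1)).comp (d n) = 0
  /-- the filtration: a decreasing family of degreewise subspaces -/
  F : ℤ → ∀ n, Submodule ℚ (X n)
  Fmono : ∀ i j : ℤ, i ≤ j → ∀ n, F j n ≤ F i n
  /-- each `F i` is a subcomplex: it is preserved by the differential -/
  Fd : ∀ i n, ∀ x ∈ F i n, d n x ∈ F i (n + 1)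

attribute [instance] FilteredComplex.acg FilteredComplex.mod

namespace FilteredComplex

/-- Cocycles (in degree `n+1`). -/
def Zc (C : FilteredComplex) (n : ℤ) : Submodule ℚ (C.X (n + 1)) :=
  LinearMap.ker (C.d (n + 1))

/-- Coboundaries (in degree `n+1`). -/
def Bc (C : FilteredComplex) (n : ℤ) : Submodule ℚ (C.X (n + 1)) :=
  LinearMap.range (C.d n)

/-- Cohomology of `C` in degree `n+1`. -/
abbrev Hc (C : FilteredComplex) (n : ℤ) :=
  ↥(C.Zc n) ⧸ (C.Bc n).comap (C.Zc n).subtype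

/-- The induced filtration on cohomology: `Ssub i` is the subspace of classes
admitting a representative cocycle lying in `F i`. -/
def Ssub (C : FilteredComplex) (i n : ℤ) : Submodule ℚ (C.Hc n) :=
  Submodule.map ((C.Bc n).comap (C.Zc n).subtype).mkQ
    ((C.F i (n + 1)).comap (C.Zc n).subtype)

/-- Transport along an equality of degrees. -/
def cE (C : FilteredComplex) {a b : ℤ} (h : a = b) : C.X a ≃ₗ[ℚ] C.X b := by
  subst h; exact LinearEquiv.refl ℚ _

/-- The differential of the dual complex `C*`: the space of `C*` in degree `n`
is `(C.X (−n))*`, and the differential `(C.X (−n))* → (C.X (−(n+1)))*` is the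
transpose of the differential `C.X (−(n+1)) → C.X (−n)` of `C`. -/
def dstar (C : FilteredComplex) (n : ℤ) :
    Module.Dual ℚ (C.X (-n)) →ₗ[ℚ] Module.Dual ℚ (C.X (-(n + 1))) :=
  LinearMap.dualMap
    ((C.cE (show -(n + 1) + 1 = -n by ring)).toLinearMap.comp (C.d (-(n + 1))))

/-- The filtration on the dual complex: `G_j` in degree `n` consists of the
functionals vanishing on `F (1−j)`. -/
def Gsub (C : FilteredComplex) (j n : ℤ) :
    Submodule ℚ (Module.Dual ℚ (C.X (-n))) :=
  (C.F (1 - j) (-n)).dualAnnihilator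

/-- Cocycles of the dual complex (in degree `n+1`). -/
def Zs (C : FilteredComplex) (n : ℤ) :
    Submodule ℚ (Module.Dual ℚ (C.X (-(n + 1)))) :=
  LinearMap.ker (C.dstar (n + 1))

/-- Coboundaries of the dual complex (in degree `n+1`). -/
def Bs (C : FilteredComplex) (n : ℤ) :
    Submodule ℚ (Module.Dual ℚ (C.X (-(n + 1)))) :=
  LinearMap.range (C.dstar n)

/-- Cohomology of the dual complex `C*` in degree `n+1`. -/
abbrev Hs (C : FilteredComplex) (n : ℤ) :=
  ↥(C.Zs n) ⧸ (C.Bs n).comap (C.Zs n).subtype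

/-- The filtration induced by `G` on the cohomology of the dual complex:
classes with a representative cocycle lying in `G j`. -/
def Tsub (C : FilteredComplex) (j n : ℤ) : Submodule ℚ (C.Hs n) :=
  Submodule.map ((C.Bs n).comap (C.Zs n).subtype).mkQ
    ((C.Gsub j (n + 1)).comap (C.Zs n).subtype)

end FilteredComplex

/-!
For subspaces `Q ≤ P` of a vector space `V`, restricting functionals identifies `Q^⊥ / P^⊥` with
the dual of `P / Q`. Under this identification, the image of `F^⊥` in `Q^⊥ / P^⊥` is the annihilator
of the image of `F` in `P / Q`, since `((F ∩ P) + Q)^⊥ = (F^⊥ ∩ Q^⊥) + P^⊥` by the modular law.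

Apply this twice. With `P` the cocycles and `Q` the coboundaries of `C`, the space `Q^⊥ / P^⊥` is
the cohomology of `C*`, so `H(C*)` is the dual of `H(C)` and `T_j` is the annihilator of `S_{1-j}`.
With `P = S_i` and `Q = S_{i+1}` inside `H(C)`, it follows that
`T_{-i} / T_{-i+1} = S_{i+1}^⊥ / S_i^⊥` is the dual of `S_i / S_{i+1}`.
-/

open Module

lemma dualAnnihilator_map_dualMap {R V W : Type*} [CommSemiring R] [AddCommMonoid V] [Module R V]
    [AddCommMonoid W] [Module R W] (e : V ≃ₗ[R] W) (S : Submodule R W) :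
    S.dualAnnihilator.map e.dualMap.toLinearMap = (S.comap e.toLinearMap).dualAnnihilator := by
  refine le_antisymm (Submodule.dualAnnihilator_map_dualMap_le S e.toLinearMap) fun φ hφ => ?_
  rw [Submodule.mem_map_equiv, Submodule.mem_dualAnnihilator]
  intro w hw
  exact (Submodule.mem_dualAnnihilator φ).mp hφ (e.symm w) (by simpa using hw)

lemma dualAnnihilator_inf_sup_of_le {K V : Type*} [Field K] [AddCommGroup V] [Module K V]
    {P Q : Submodule K V} (hQP : Q ≤ P) (F : Submodule K V) :
    (F ⊓ P ⊔ Q).dualAnnihilator =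
      F.dualAnnihilator ⊓ Q.dualAnnihilator ⊔ P.dualAnnihilator := by
  rw [← Submodule.dualAnnihilator_sup_eq, ← Subspace.dualAnnihilator_inf_eq,
    sup_comm F Q, sup_inf_assoc_of_le F hQP, sup_comm]

/-- The subquotient `P / (P ∩ Q)` of a module, for submodules `P` and `Q`: cohomology for `P` the
cocycles and `Q` the coboundaries, an associated graded piece for two steps of a filtration. -/
abbrev Subquotient {R V : Type*} [Ring R] [AddCommGroup V] [Module R V]
    (P Q : Submodule R V) : Type _ :=
  ↥P ⧸ Q.comap P.subtype

namespace Subquotient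

section Ring

variable {R V W : Type*} [Ring R] [AddCommGroup V] [Module R V] [AddCommGroup W] [Module R W]

/-- The submodule of `P / (P ∩ Q)` induced by a submodule `F` of the ambient module: the classes
with a representative in `F`. -/
def induced (P Q F : Submodule R V) : Submodule R (Subquotient P Q) :=
  (F.comap P.subtype).map (Q.comap P.subtype).mkQ

lemma mk_mem_induced {P Q F : Submodule R V} {x : P} :
    (Submodule.Quotient.mk x : Subquotient P Q) ∈ induced P Q F ↔ (x : V) ∈ F ⊓ P ⊔ Q := by
  simp only [induced, Submodule.mem_map, Submodule.mkQ_apply, Submodule.Quotient.eq,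
    Submodule.mem_comap, Submodule.mem_sup, Submodule.mem_inf]
  constructor
  · rintro ⟨y, hyF, hyx⟩
    exact ⟨y, ⟨hyF, y.2⟩, x - y, by simpa using Q.neg_mem hyx, add_sub_cancel _ _⟩
  · rintro ⟨y, ⟨hyF, hyP⟩, q, hq, hx⟩
    refine ⟨⟨y, hyP⟩, hyF, ?_⟩
    simpa [← hx] using hq

variable {P Q : Submodule R V} {P' Q' : Submodule R W}

lemma map_ofSubmodules_comap_subtype (e : V ≃ₗ[R] W)
    (hP : P.map e.toLinearMap = P') (F : Submodule R V) :
    (F.comap P.subtype).map (e.ofSubmodules P P' hP).toLinearMap =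
      (F.map e.toLinearMap).comap P'.subtype := by
  ext y
  simp [Submodule.map_equiv_eq_comap_symm]

/-- The isomorphism of subquotients induced by an isomorphism of the ambient modules. -/
def congr (e : V ≃ₗ[R] W) (hP : P.map e.toLinearMap = P') (hQ : Q.map e.toLinearMap = Q') :
    Subquotient P Q ≃ₗ[R] Subquotient P' Q' :=
  Submodule.Quotient.equiv _ _ (e.ofSubmodules P P' hP)
    ((map_ofSubmodules_comap_subtype e hP Q).trans (by rw [hQ]))

lemma map_congr_induced (e : V ≃ₗ[R] W) (hP : P.map e.toLinearMap = P')
    (hQ : Q.map e.toLinearMap = Q') (F : Submodule R V) :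
    (induced P Q F).map (congr e hP hQ).toLinearMap = induced P' Q' (F.map e.toLinearMap) := by
  rw [induced, induced, ← map_ofSubmodules_comap_subtype e hP, ← Submodule.map_comp,
    ← Submodule.map_comp]
  rfl

end Ring

section CommRing

variable {R V : Type*} [CommRing R] [AddCommGroup V] [Module R V] (P Q : Submodule R V)

/-- Restriction of functionals from the ambient module to a subquotient `P / (P ∩ Q)`, defined on
the functionals vanishing on `Q`. -/
def dualRestrict : Q.dualAnnihilator →ₗ[R] Dual R (Subquotient P Q) :=
  (Submodule.mapQ (Q.comap P.subtype) Q P.subtype le_rfl).dualMap ∘ₗ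
    Q.dualQuotEquivDualAnnihilator.symm.toLinearMap

lemma ker_dualRestrict :
    LinearMap.ker (dualRestrict P Q) = P.dualAnnihilator.comap Q.dualAnnihilator.subtype := by
  ext φ
  rw [LinearMap.mem_ker, Submodule.mem_comap, Submodule.mem_dualAnnihilator]
  refine ⟨fun h x hx => LinearMap.congr_fun h (Submodule.Quotient.mk ⟨x, hx⟩), fun h => ?_⟩
  ext x
  exact h x x.2

end CommRing

section Field

variable {K V : Type*} [Field K] [AddCommGroup V] [Module K V] (P Q : Submodule K V)

lemma dualRestrict_surjective : Function.Surjective (dualRestrict P Q) := by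
  refine (LinearMap.dualMap_surjective_of_injective ?_).comp (LinearEquiv.surjective _)
  rw [← LinearMap.ker_eq_bot, Submodule.ker_mapQ, Submodule.mkQ_map_self]

/-- The duality `Q^⊥ / P^⊥ ≃ (P / Q)^*` given by restriction of functionals. -/
def dualEquiv : Subquotient Q.dualAnnihilator P.dualAnnihilator ≃ₗ[K] Dual K (Subquotient P Q) :=
  (Submodule.quotEquivOfEq _ _ (ker_dualRestrict P Q).symm).trans
    ((dualRestrict P Q).quotKerEquivOfSurjective (dualRestrict_surjective P Q))

variable {P Q}

lemma dualEquiv_mk_mem_dualAnnihilator_induced {F : Submodule K V} {φ : Q.dualAnnihilator} :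
    dualEquiv P Q (Submodule.Quotient.mk φ) ∈ (induced P Q F).dualAnnihilator ↔
      (φ : Dual K V) ∈ (F ⊓ P ⊔ Q).dualAnnihilator := by
  rw [Submodule.dualAnnihilator_sup_eq, Submodule.mem_inf, and_iff_left φ.2,
    Submodule.mem_dualAnnihilator, Submodule.mem_dualAnnihilator]
  constructor
  · intro h x hx
    exact h _ ⟨⟨x, hx.2⟩, hx.1, rfl⟩
  · rintro h _ ⟨x, hxF, rfl⟩
    exact h x ⟨hxF, x.2⟩

theorem map_dualEquiv_induced (hQP : Q ≤ P) (F : Submodule K V) :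
    (induced Q.dualAnnihilator P.dualAnnihilator F.dualAnnihilator).map
      (dualEquiv P Q).toLinearMap = (induced P Q F).dualAnnihilator := by
  ext ψ
  obtain ⟨ξ, rfl⟩ := (dualEquiv P Q).surjective ψ
  obtain ⟨φ, rfl⟩ := Submodule.Quotient.mk_surjective _ ξ
  rw [dualEquiv_mk_mem_dualAnnihilator_induced, dualAnnihilator_inf_sup_of_le hQP, ← mk_mem_induced,
    Submodule.mem_map_equiv, LinearEquiv.symm_apply_apply]

end Field

end Subquotient

namespace FilteredComplex

variable (C : FilteredComplex)

lemma Ssub_eq_induced (i n : ℤ) :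
    C.Ssub i n = Subquotient.induced (C.Zc n) (C.Bc n) (C.F i (n + 1)) :=
  rfl

lemma Tsub_eq_induced (j n : ℤ) :
    C.Tsub j n = Subquotient.induced (C.Zs n) (C.Bs n) (C.Gsub j (n + 1)) :=
  rfl

lemma Bc_le_Zc (n : ℤ) : C.Bc n ≤ C.Zc n :=
  LinearMap.range_le_ker_iff.mpr (C.dsq n)

lemma comap_cE_F {a b : ℤ} (h : a = b) (i : ℤ) :
    (C.F i b).comap (C.cE h).toLinearMap = C.F i a := by
  subst h
  rfl

lemma comap_cE_ker_d {a b : ℤ} (h : a = b) :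
    (LinearMap.ker (C.d b)).comap (C.cE h).toLinearMap = LinearMap.ker (C.d a) := by
  subst h
  rfl

lemma Zs_eq_dualAnnihilator (n : ℤ) :
    C.Zs n = ((C.Bc (-(n + 1 + 1))).map
      (C.cE (show -(n + 1 + 1) + 1 = -(n + 1) by ring)).toLinearMap).dualAnnihilator := by
  rw [Zs, dstar, LinearMap.ker_dualMap_eq_dualAnnihilator_range, LinearMap.range_comp, Bc]

lemma Bs_eq_dualAnnihilator (n : ℤ) :
    C.Bs n = (LinearMap.ker (C.d (-(n + 1)))).dualAnnihilator := by
  rw [Bs, dstar, LinearMap.range_dualMap_eq_dualAnnihilator_ker, LinearEquiv.ker_comp]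

/-- The cohomology of the dual complex in degree `n + 1` is the dual of the cohomology of `C` in
degree `-(n + 2) + 1 = -(n + 1)`. These two degrees agree only propositionally, hence the transpose
of `cE`. -/
def cohomologyDualEquiv (n : ℤ) : C.Hs n ≃ₗ[ℚ] Dual ℚ (C.Hc (-(n + 1 + 1))) :=
  (Subquotient.congr (C.cE (show -(n + 1 + 1) + 1 = -(n + 1) by ring)).dualMap
    (by rw [Zs_eq_dualAnnihilator, dualAnnihilator_map_dualMap,
      Submodule.comap_map_eq_of_injective (LinearEquiv.injective _)])
    (by rw [Bs_eq_dualAnnihilator, dualAnnihilator_map_dualMap, comap_cE_ker_d, Zc])).trans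
  (Subquotient.dualEquiv (C.Zc (-(n + 1 + 1))) (C.Bc (-(n + 1 + 1))))

theorem map_cohomologyDualEquiv_Tsub (j n : ℤ) :
    (C.Tsub j n).map (C.cohomologyDualEquiv n).toLinearMap =
      (C.Ssub (1 - j) (-(n + 1 + 1))).dualAnnihilator := by
  rw [Tsub_eq_induced, Ssub_eq_induced, cohomologyDualEquiv, LinearEquiv.coe_trans,
    Submodule.map_comp, Subquotient.map_congr_induced, Gsub, dualAnnihilator_map_dualMap,
    comap_cE_F, Subquotient.map_dualEquiv_induced (C.Bc_le_Zc _)]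

/-- The duality between the graded pieces `T_{-i} / T_{-i+1}` and `S_i / S_{i+1}`. -/
def gradedDualEquiv (i n : ℤ) :
    Subquotient (C.Tsub (-i) n) (C.Tsub (-i + 1) n) ≃ₗ[ℚ]
      Dual ℚ (Subquotient (C.Ssub i (-(n + 1 + 1))) (C.Ssub (i + 1) (-(n + 1 + 1)))) :=
  (Subquotient.congr (C.cohomologyDualEquiv n)
    (by rw [map_cohomologyDualEquiv_Tsub, show 1 - -i = i + 1 by ring])
    (by rw [map_cohomologyDualEquiv_Tsub, show 1 - (-i + 1) = i by ring])).trans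
  (Subquotient.dualEquiv _ _)

lemma dstar_mem_Gsub {j n : ℤ} {φ : Dual ℚ (C.X (-n))} (hφ : φ ∈ C.Gsub j n) :
    C.dstar n φ ∈ C.Gsub j (n + 1) := by
  refine (Submodule.mem_dualAnnihilator _).mpr fun x hx => ?_
  have d_mem : C.cE (show -(n + 1) + 1 = -n by ring) (C.d (-(n + 1)) x) ∈ C.F (1 - j) (-n) := by
    rw [← LinearEquiv.coe_coe, ← Submodule.mem_comap, comap_cE_F]
    exact C.Fd _ _ x hx
  exact (Submodule.mem_dualAnnihilator φ).mp hφ _ d_mem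

lemma Gsub_anti {j j' : ℤ} (hj : j ≤ j') (n : ℤ) : C.Gsub j' n ≤ C.Gsub j n :=
  Submodule.dualAnnihilator_anti (C.Fmono _ _ (sub_le_sub_left hj 1) _)

lemma Gsub_one_sub (i n : ℤ) : C.Gsub (1 - i) n = (C.F i (-n)).dualAnnihilator := by
  rw [Gsub, sub_sub_cancel]

end FilteredComplex

theorem dual_filtered_complex_general
    (C : FilteredComplex) (m M : ℤ)
    (hm : ∀ n, C.F m n = ⊤) (hM : ∀ n, C.F M n = ⊥) :
    ((∀ j n : ℤ, ∀ φ ∈ C.Gsub j n, C.dstar n φ ∈ C.Gsub j (n + 1)) ∧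
     (∀ j j' : ℤ, j ≤ j' → ∀ n : ℤ, C.Gsub j' n ≤ C.Gsub j n) ∧
     (∀ n : ℤ, C.Gsub (1 - M) n = ⊤) ∧
     (∀ n : ℤ, C.Gsub (1 - m) n = ⊥)) ∧
    (∀ i n : ℤ, Nonempty (
      (↥(C.Tsub (-i) n) ⧸ (C.Tsub (-i + 1) n).comap (C.Tsub (-i) n).subtype)
        ≃ₗ[ℚ]
      Module.Dual ℚ
        (↥(C.Ssub i (-n - 2)) ⧸
          (C.Ssub (i + 1) (-n - 2)).comap (C.Ssub i (-n - 2)).subtype))) := by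
  refine ⟨⟨fun j n φ hφ => C.dstar_mem_Gsub hφ, fun j j' hj n => C.Gsub_anti hj n,
    fun n => ?_, fun n => ?_⟩, fun i n => ?_⟩
  · rw [C.Gsub_one_sub, hM, Submodule.dualAnnihilator_bot]
  · rw [C.Gsub_one_sub, hm, Submodule.dualAnnihilator_top]
  · rw [show -n - 2 = -(n + 1 + 1) by ring]
    exact ⟨C.gradedDualEquiv i n⟩

/-- Let `C` be a cochain complex of finite-dimensional
ℚ-vector spaces, nonzero in only finitely many degrees, with a finite
decreasing filtration by subcomplexes (`F m = ⊤`, `F M = ⊥`).  Filter the dual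
complex `C*` by `G_j = {φ : φ` vanishes on `F (1−j)}`.  Then:
(1) each `G_j` is a subcomplex of `C*`, the family `G_j` is a finite decreasing
filtration of `C*` with largest term `C*` (at `j = 1−M`) and smallest term `0`
(at `j = 1−m`); and
(2) for every `i` and every degree, the associated graded piece
`T_{−i}/T_{−i+1}` of the induced filtration on `H(C*)` is isomorphic as a
ℚ-vector space to the dual of the associated graded piece `S_i/S_{i+1}` of the
induced filtration on `H(C)` in the corresponding dual degree. -/
theorem dual_filtered_complex
    (C : FilteredComplex) (m M : ℤ)
    (hfin : ∀ n, FiniteDimensional ℚ (C.X n))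
    (hbdd : ∃ N : ℤ, ∀ n : ℤ, N ≤ |n| → Subsingleton (C.X n))
    (hm : ∀ n, C.F m n = ⊤) (hM : ∀ n, C.F M n = ⊥) :
    -- (1) `G` is a finite decreasing filtration of `C*` by subcomplexes
    ((∀ j n : ℤ, ∀ φ ∈ C.Gsub j n, C.dstar n φ ∈ C.Gsub j (n + 1)) ∧
     (∀ j j' : ℤ, j ≤ j' → ∀ n : ℤ, C.Gsub j' n ≤ C.Gsub j n) ∧
     (∀ n : ℤ, C.Gsub (1 - M) n = ⊤) ∧
     (∀ n : ℤ, C.Gsub (1 - m) n = ⊥)) ∧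
    -- (2) associated graded pieces of `H(C*)` are dual to those of `H(C)`:
    -- `Hs C n` is `H^{n+1}(C*)`, whose dual degree corresponds to
    -- `H^{-(n+1)}(C) = Hc C (-n-2)`.
    (∀ i n : ℤ, Nonempty (
      (↥(C.Tsub (-i) n) ⧸ (C.Tsub (-i + 1) n).comap (C.Tsub (-i) n).subtype)
        ≃ₗ[ℚ]
      Module.Dual ℚ
        (↥(C.Ssub i (-n - 2)) ⧸
          (C.Ssub (i + 1) (-n - 2)).comap (C.Ssub i (-n - 2)).subtype))) := 
  dual_filtered_complex_general C m M hm hM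
end
end
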